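/- Let n ≥ 2, let Ω ⊂ ℝⁿ be a domain (bounded connected open set), let F ∈ C⁰(Ω × ℝ × ℝⁿ × S^{n×n}) be degenerate elliptic, let E ⊂ Ω be a smooth closed embedded submanifold of dimension k with 0 ≤ k ≤ n − 2, and let f ∈ USC(Ω). Assume u ∈ LSC(Ω ∖ E) satisfies inf_{Ω∖E} u > −∞, satisfies λ₁(∇²u) + ⋯ + λ_{k+2}(∇²u) ≤ 0 in Ω ∖ E in the viscosity sense (λ₁(M) ≤ ⋯ ≤ λₙ(M) the eigenvalues of M in non-decreasing order), and satisfies F(x, u, ∇u, ∇²u) ≤ f(x) in Ω ∖ E in the viscosity sense. Then, after extending u to E by u(x) := liminf_{y → x, y ∈ Ω∖E} u(y), one has F(x, u, ∇u, ∇²u) ≤ f(x) in all of Ω in the viscosity sense. -/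

import Mathlib

open Set Metric

noncomputable section

/-- ℝⁿ, realized as Euclidean space on `Fin n`. -/
abbrev En (n : ℕ) := EuclideanSpace ℝ (Fin n)

/-- The Hessian matrix `∇²φ(x)` of a real-valued function on ℝⁿ. -/
noncomputable def hess {n : ℕ} (φ : En n → ℝ) (x : En n) : Matrix (Fin n) (Fin n) ℝ :=
  Matrix.of fun i j =>
    iteratedFDeriv ℝ 2 φ x ![EuclideanSpace.single i 1, EuclideanSpace.single j 1]

/-- `u` satisfies `F(x, u, ∇u, ∇²u) ≤ f(x)` in the open set `O` in the viscosity sense: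
for every test function `φ ∈ C²(O)` and every `x₀ ∈ O` at which `u - φ` attains a local
minimum with `u x₀ = φ x₀`, one has `F(x₀, φ(x₀), ∇φ(x₀), ∇²φ(x₀)) ≤ f(x₀)`. -/
def IsViscositySupersolution {n : ℕ}
    (F : En n → ℝ → En n → Matrix (Fin n) (Fin n) ℝ → ℝ)
    (f : En n → ℝ) (O : Set (En n)) (u : En n → ℝ) : Prop :=
  ∀ φ : En n → ℝ, ContDiffOn ℝ 2 φ O → ∀ x₀ ∈ O, u x₀ = φ x₀ →
    IsLocalMinOn (fun x => u x - φ x) O x₀ →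
    F x₀ (φ x₀) (gradient φ x₀) (hess φ x₀) ≤ f x₀

/-- `F` is degenerate elliptic: `F(x,s,p,M+N) ≥ F(x,s,p,M)` for all arguments and all
positive definite symmetric `N`. -/
def DegenerateElliptic {n : ℕ} (Ω : Set (En n))
    (F : En n → ℝ → En n → Matrix (Fin n) (Fin n) ℝ → ℝ) : Prop :=
  ∀ x ∈ Ω, ∀ (s : ℝ) (p : En n) (M N : Matrix (Fin n) (Fin n) ℝ),
    N.PosDef → F x s p M ≤ F x s p (M + N)

/-- `E` is a smooth (C^∞) closed (compact, boundaryless) embedded `k`-dimensional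
submanifold of ℝⁿ: `E` is compact and near each of its points there is a smooth chart
straightening `E` onto the coordinate subspace `{z : z_i = 0 for i ≥ k}`. -/
def IsSmoothClosedSubmanifold {n : ℕ} (k : ℕ) (E : Set (En n)) : Prop :=
  IsCompact E ∧
  ∀ x ∈ E, ∃ (U V : Set (En n)) (φ ψ : En n → En n),
    IsOpen U ∧ IsOpen V ∧ x ∈ U ∧
    ContDiffOn ℝ (⊤ : ℕ∞) φ U ∧ ContDiffOn ℝ (⊤ : ℕ∞) ψ V ∧
    Set.MapsTo φ U V ∧ Set.MapsTo ψ V U ∧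
    (∀ y ∈ U, ψ (φ y) = y) ∧ (∀ z ∈ V, φ (ψ z) = z) ∧
    φ '' (E ∩ U) = V ∩ {z : En n | ∀ i : Fin n, k ≤ (i : ℕ) → z i = 0}

/-- The eigenvalues of a symmetric matrix, listed in non-decreasing order
`λ₁(M) ≤ ⋯ ≤ λₙ(M)` (junk value `0` for non-symmetric matrices). -/
noncomputable def sortedEigs {n : ℕ} (M : Matrix (Fin n) (Fin n) ℝ) : Fin n → ℝ :=
  if h : M.IsHermitian then h.eigenvalues ∘ Tuple.sort h.eigenvalues else fun _ => 0

/-- `λ₁(M) + ⋯ + λ_m(M)`, the sum of the `m` smallest eigenvalues of a symmetric matrix. -/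
noncomputable def sumSmallestEigs {n : ℕ} (m : ℕ) (M : Matrix (Fin n) (Fin n) ℝ) : ℝ :=
  ∑ i : Fin n, if (i : ℕ) < m then sortedEigs M i else 0

open Classical in
/-- The extension of `u` from `Ω \ E` to `E` by `u(x) := liminf_{y → x, y ∈ Ω \ E} u(y)`,
with values in the extended reals. -/
noncomputable def liminfExtension {n : ℕ} (Ω E : Set (En n)) (u : En n → ℝ) :
    En n → EReal :=
  fun x => if x ∈ E then Filter.liminf (fun y => (u y : EReal)) (nhdsWithin x (Ω \ E))
    else (u x : EReal)

/-- Viscosity supersolution, for an extended-real-valued function `v`: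
for every test function `φ ∈ C²(O)` and every `x₀ ∈ O` at which `v - φ` attains a local
minimum with `v x₀ = φ x₀`, one has `F(x₀, φ(x₀), ∇φ(x₀), ∇²φ(x₀)) ≤ f(x₀)`. -/
def ERealIsViscositySupersolution {n : ℕ}
    (F : En n → ℝ → En n → Matrix (Fin n) (Fin n) ℝ → ℝ)
    (f : En n → ℝ) (O : Set (En n)) (v : En n → EReal) : Prop :=
  ∀ φ : En n → ℝ, ContDiffOn ℝ 2 φ O → ∀ x₀ ∈ O, v x₀ = (φ x₀ : EReal) →
    (∀ᶠ x in nhdsWithin x₀ O, (φ x : EReal) ≤ v x) →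
    F x₀ (φ x₀) (gradient φ x₀) (hess φ x₀) ≤ f x₀

/-!
Suppose a test function `φ` touches the extended `u` from below at `x₀ ∈ E` while
`F > f` at the jet of `φ`; this strict inequality survives small `C²` perturbations of `φ`, such
as `φ - δ|x - x₀|²`. Near `x₀`, let `Φ` be a `C²` map that vanishes on `E` and whose derivative at
`x₀` has the `k`-dimensional tangent space of `E` as its kernel. For small `p` the perturbed
function `φ - δ|x - x₀|² + ⟪p, Φ⟫` still lies below `u` off `E`: otherwise, as the perturbation
vanishes on `E`, a negative minimum of the difference is attained off `E`, where `F > f` forbids it.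
Choosing `p = A Φ(x)` at each `x` yields `u ≥ φ - δ|x - x₀|² + A‖Φ‖²`. For large `A` the right hand
side has positive Laplacian along every orthonormal `(k + 2)`-frame, since each such frame contains
a vector transverse to `E`.

On the other hand `E` is polar for functions that are superharmonic along `(k + 2)`-frames: sums of
truncated kernels `|x|⁻ᵏ` (`-log |x|` if `k = 0`) over a fine grid of points of `E` diverge
logarithmically on `E` relative to their values off `E`. Comparing `u` with the strictly subharmonic
minorant plus `η` times one minus such a potential therefore lifts `u` off `E` to at least
`φ(x₀) + η / 2` near `x₀`, contradicting that the lower limit of `u` at `x₀` is `φ(x₀)`.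
-/

open Filter Topology Module
open scoped InnerProductSpace

/-! ### Laplacians along finite families of vectors -/

section FrameLaplacian

variable {ι V W : Type*} [Fintype ι] [NormedAddCommGroup V] [NormedSpace ℝ V]
  [NormedAddCommGroup W] [InnerProductSpace ℝ W]

/-- The sum `∑ᵢ D²g(x)[vᵢ, vᵢ]` of second derivatives along a finite family of vectors. For an
orthonormal family this is the Laplacian of `g` along the span of `v`. -/
def frameLaplacian (v : ι → V) (g : V → ℝ) (x : V) : ℝ :=
  ∑ i, iteratedFDeriv ℝ 2 g x ![v i, v i]

variable {v : ι → V} {g h : V → ℝ} {x : V}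

lemma frameLaplacian_eq_sum_fderiv_fderiv :
    frameLaplacian v g x = ∑ i, fderiv ℝ (fderiv ℝ g) x (v i) (v i) := by
  simp [frameLaplacian, iteratedFDeriv_two_apply]

lemma frameLaplacian_add (hg : ContDiffAt ℝ 2 g x) (hh : ContDiffAt ℝ 2 h x) :
    frameLaplacian v (fun z => g z + h z) x = frameLaplacian v g x + frameLaplacian v h x := by
  have key : iteratedFDeriv ℝ 2 (fun z => g z + h z) x =
      iteratedFDeriv ℝ 2 g x + iteratedFDeriv ℝ 2 h x := iteratedFDeriv_add_apply hg hh
  simp [frameLaplacian, key, Finset.sum_add_distrib]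

lemma frameLaplacian_const_mul (hg : ContDiffAt ℝ 2 g x) (c : ℝ) :
    frameLaplacian v (fun z => c * g z) x = c * frameLaplacian v g x := by
  have key : iteratedFDeriv ℝ 2 (fun z => c * g z) x = c • iteratedFDeriv ℝ 2 g x := by
    simpa only [smul_eq_mul] using iteratedFDeriv_const_smul_apply' (a := c) hg
  simp [frameLaplacian, key, Finset.mul_sum]

lemma frameLaplacian_sum {κ : Type*} {s : Finset κ} {g : κ → V → ℝ}
    (hg : ∀ j ∈ s, ContDiffAt ℝ 2 (g j) x) :
    frameLaplacian v (fun z => ∑ j ∈ s, g j z) x = ∑ j ∈ s, frameLaplacian v (g j) x := by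
  simp only [frameLaplacian, iteratedFDeriv_fun_sum_apply hg, sum_apply]
  exact Finset.sum_comm

lemma frameLaplacian_add_const (c : ℝ) :
    frameLaplacian v (fun z => g z + c) x = frameLaplacian v g x := by
  have key : fderiv ℝ (fun z => g z + c) = fderiv ℝ g := funext fun z => fderiv_add_const c
  simp only [frameLaplacian_eq_sum_fderiv_fderiv, key]

lemma frameLaplacian_comp {ℓ ℓ' : ℝ → ℝ} {c : ℝ} (hg : ContDiffAt ℝ 2 g x)
    (hℓ : ∀ᶠ z in 𝓝 x, HasDerivAt ℓ (ℓ' (g z)) (g z)) (hℓ' : HasDerivAt ℓ' c (g x)) :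
    frameLaplacian v (fun z => ℓ (g z)) x =
      c * ∑ i, fderiv ℝ g x (v i) ^ 2 + ℓ' (g x) * frameLaplacian v g x := by
  have hgd : ∀ᶠ z in 𝓝 x, HasFDerivAt g (fderiv ℝ g z) z :=
    (hg.eventually (by simp)).mono fun z hz => (hz.differentiableAt two_ne_zero).hasFDerivAt
  have first : fderiv ℝ (fun z => ℓ (g z)) =ᶠ[𝓝 x] fun z => ℓ' (g z) • fderiv ℝ g z := by
    filter_upwards [hℓ, hgd] with z hz hgz using (hz.comp_hasFDerivAt z hgz).fderiv
  have hDg : HasFDerivAt (fderiv ℝ g) (fderiv ℝ (fderiv ℝ g) x) x :=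
    ((hg.fderiv_right (m := 1) (by norm_num)).differentiableAt one_ne_zero).hasFDerivAt
  have second : HasFDerivAt (fun z => ℓ' (g z) • fderiv ℝ g z) _ x :=
    (hℓ'.comp_hasFDerivAt x hgd.self_of_nhds).smul hDg
  simp only [frameLaplacian_eq_sum_fderiv_fderiv, first.fderiv_eq, second.fderiv, Finset.mul_sum,
    ← Finset.sum_add_distrib]
  refine Finset.sum_congr rfl fun i _ => ?_
  simp only [Function.comp_apply, add_apply, smul_apply, ContinuousLinearMap.smulRight_apply,
    smul_eq_mul]
  ring

lemma frameLaplacian_norm_sq {Φ : V → W} (hΦ : ContDiffAt ℝ 2 Φ x) :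
    frameLaplacian v (fun z => ‖Φ z‖ ^ 2) x =
      2 * ∑ i, (‖fderiv ℝ Φ x (v i)‖ ^ 2 + ⟪Φ x, fderiv ℝ (fderiv ℝ Φ) x (v i) (v i)⟫_ℝ) := by
  have hΦd : ∀ᶠ z in 𝓝 x, HasFDerivAt Φ (fderiv ℝ Φ z) z :=
    (hΦ.eventually (by simp)).mono fun z hz => (hz.differentiableAt two_ne_zero).hasFDerivAt
  have first : fderiv ℝ (fun z => ‖Φ z‖ ^ 2) =ᶠ[𝓝 x]
      fun z => (2 : ℕ) • (innerSL ℝ (Φ z)).comp (fderiv ℝ Φ z) := by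
    filter_upwards [hΦd] with z hz using hz.norm_sq.fderiv
  have hDΦ : HasFDerivAt (fderiv ℝ Φ) (fderiv ℝ (fderiv ℝ Φ) x) x :=
    ((hΦ.fderiv_right (m := 1) (by norm_num)).differentiableAt one_ne_zero).hasFDerivAt
  have second : HasFDerivAt (fun z => (2 : ℕ) • (innerSL ℝ (Φ z)).comp (fderiv ℝ Φ z)) _ x :=
    (((innerSL ℝ).hasFDerivAt.comp x hΦd.self_of_nhds).clm_comp hDΦ).const_smul (2 : ℕ)
  simp only [frameLaplacian_eq_sum_fderiv_fderiv, first.fderiv_eq, second.fderiv, Finset.mul_sum]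
  refine Finset.sum_congr rfl fun i _ => ?_
  rw [← real_inner_self_eq_norm_sq, add_comm]
  exact (two_nsmul _).trans (two_mul _).symm

lemma frameLaplacian_norm_sub_sq {V : Type*} [NormedAddCommGroup V] [InnerProductSpace ℝ V]
    {v : ι → V} (hv : Orthonormal ℝ v) (y x : V) :
    frameLaplacian v (fun z => ‖z - y‖ ^ 2) x = 2 * Fintype.card ι := by
  have hD : fderiv ℝ (fun z : V => z - y) = fun _ => ContinuousLinearMap.id ℝ V :=
    funext fun z => ((hasFDerivAt_id z).sub_const y).fderiv
  rw [frameLaplacian_norm_sq (by fun_prop)]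
  simp [hD, hv.norm_eq_one]

lemma continuous_frameLaplacian_left (g : V → ℝ) (x : V) :
    Continuous fun v : ι → V => frameLaplacian v g x := by
  simp only [frameLaplacian_eq_sum_fderiv_fderiv]
  fun_prop

lemma continuousAt_frameLaplacian (hg : ContDiffAt ℝ 2 g x) :
    ContinuousAt (fun z : V × (ι → V) => frameLaplacian z.2 g z.1) (x, v) := by
  have hD2 : ContinuousAt (fun z : V × (ι → V) => fderiv ℝ (fderiv ℝ g) z.1) (x, v) :=
    ContinuousAt.comp (g := fderiv ℝ (fderiv ℝ g)) (f := Prod.fst)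
      ((hg.fderiv_right (m := 1) (by norm_num)).fderiv_right (m := 0) (by norm_num)).continuousAt
      continuousAt_fst
  simp only [frameLaplacian_eq_sum_fderiv_fderiv]
  exact tendsto_finsetSum _ fun i _ => (hD2.clm_apply (by fun_prop)).clm_apply (by fun_prop)

end FrameLaplacian

lemma isCompact_setOf_orthonormal {ι V : Type*} [Finite ι] [NormedAddCommGroup V]
    [InnerProductSpace ℝ V] [FiniteDimensional ℝ V] :
    IsCompact {v : ι → V | Orthonormal ℝ v} := by
  classical
  have := Fintype.ofFinite ι
  refine Metric.isCompact_of_isClosed_isBounded ?_ ?_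
  · simp only [orthonormal_iff_ite, ofPred_forall]
    exact isClosed_iInter fun i => isClosed_iInter fun j =>
      isClosed_eq (by fun_prop) continuous_const
  · refine isBounded_closedBall (x := (0 : ι → V)) (r := 1) |>.subset fun v hv => ?_
    rw [mem_closedBall_zero_iff, pi_norm_le_iff_of_nonneg zero_le_one]
    exact fun i => (hv.1 i).le

/-! ### Hessians and sums of smallest eigenvalues -/

section Hessian

variable {n m : ℕ} {g : En n → ℝ} {x : En n}

lemma hess_apply (g : En n → ℝ) (x : En n) (i j : Fin n) :
    hess g x i j =
      fderiv ℝ (fderiv ℝ g) x (EuclideanSpace.single i 1) (EuclideanSpace.single j 1) := by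
  simp [hess, iteratedFDeriv_two_apply]

lemma hess_isHermitian (hg : ContDiffAt ℝ 2 g x) : (hess g x).IsHermitian := by
  ext i j
  simpa [hess_apply] using hg.isSymmSndFDerivAt (by simp) _ _

lemma dotProduct_hess_mulVec (g : En n → ℝ) (x v w : En n) :
    v.ofLp ⬝ᵥ (hess g x).mulVec w.ofLp = fderiv ℝ (fderiv ℝ g) x v w := by
  have expand (z : En n) : z = ∑ i, z i • EuclideanSpace.single i (1 : ℝ) := by
    ext j
    simp [Finset.sum_apply, Pi.single_apply]
  conv_rhs => rw [expand v, expand w]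
  simp only [map_sum, map_smul, sum_apply, smul_apply, dotProduct, Matrix.mulVec, hess_apply,
    smul_eq_mul, Finset.mul_sum]
  rw [Finset.sum_comm]
  exact Finset.sum_congr rfl fun i _ => Finset.sum_congr rfl fun j _ => by ring

lemma sumSmallestEigs_eq_sum_castLE {M : Matrix (Fin n) (Fin n) ℝ} (hM : M.IsHermitian)
    (hm : m ≤ n) :
    sumSmallestEigs m M =
      ∑ i : Fin m, hM.eigenvalues (Tuple.sort hM.eigenvalues (Fin.castLE hm i)) := by
  rw [sumSmallestEigs, sortedEigs, dif_pos hM, ← Finset.sum_filter]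
  exact Finset.sum_bij' (fun i hi => ⟨i, (Finset.mem_filter.1 hi).2⟩) (fun i _ => Fin.castLE hm i)
    (by simp) (by simp) (by simp) (by simp) (by simp)

lemma exists_orthonormal_sum_dotProduct_eq_sumSmallestEigs {M : Matrix (Fin n) (Fin n) ℝ}
    (hM : M.IsHermitian) (hm : m ≤ n) :
    ∃ v : Fin m → En n, Orthonormal ℝ v ∧
      ∑ i, (v i).ofLp ⬝ᵥ M.mulVec (v i).ofLp = sumSmallestEigs m M := by
  refine ⟨fun i => hM.eigenvectorBasis (Tuple.sort hM.eigenvalues (Fin.castLE hm i)),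
    hM.eigenvectorBasis.orthonormal.comp _
      ((Equiv.injective _).comp (Fin.castLE_injective hm)), ?_⟩
  have self_dotProduct (j : Fin n) :
      (hM.eigenvectorBasis j).ofLp ⬝ᵥ (hM.eigenvectorBasis j).ofLp = 1 := by
    have := EuclideanSpace.real_norm_sq_eq (hM.eigenvectorBasis j)
    rw [hM.eigenvectorBasis.orthonormal.1 j, one_pow] at this
    simp [dotProduct, this, sq]
  simp only [sumSmallestEigs_eq_sum_castLE hM hm, hM.mulVec_eigenvectorBasis, dotProduct_smul,
    self_dotProduct, smul_eq_mul, mul_one]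

lemma sumSmallestEigs_hess_pos (hg : ContDiffAt ℝ 2 g x) (hm : m ≤ n)
    (hpos : ∀ v : Fin m → En n, Orthonormal ℝ v → 0 < frameLaplacian v g x) :
    0 < sumSmallestEigs m (hess g x) := by
  obtain ⟨v, hv, hsum⟩ :=
    exists_orthonormal_sum_dotProduct_eq_sumSmallestEigs (hess_isHermitian hg) hm
  simpa only [← hsum, dotProduct_hess_mulVec, frameLaplacian_eq_sum_fderiv_fderiv] using hpos v hv

end Hessian

/-! ### Superharmonicity along frames -/

section FrameSuperharmonic

variable {V : Type*} [NormedAddCommGroup V] [InnerProductSpace ℝ V] {m : ℕ}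

/-- `C²` functions whose Laplacian along every `m`-dimensional subspace is nonpositive, that is,
whose Hessian has nonpositive sum over any `m` of its eigenvalues. -/
def IsFrameSuperharmonic (m : ℕ) (ψ : V → ℝ) : Prop :=
  ContDiff ℝ 2 ψ ∧ ∀ x (v : Fin m → V), Orthonormal ℝ v → frameLaplacian v ψ x ≤ 0

lemma IsFrameSuperharmonic.const_mul {ψ : V → ℝ} (hψ : IsFrameSuperharmonic m ψ) {c : ℝ}
    (hc : 0 ≤ c) : IsFrameSuperharmonic m (fun z => c * ψ z) :=
  ⟨contDiff_const.mul hψ.1, fun x v hv => by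
    rw [frameLaplacian_const_mul hψ.1.contDiffAt]
    exact mul_nonpos_of_nonneg_of_nonpos hc (hψ.2 x v hv)⟩

lemma IsFrameSuperharmonic.sum {κ : Type*} {s : Finset κ} {ψ : κ → V → ℝ}
    (hψ : ∀ j ∈ s, IsFrameSuperharmonic m (ψ j)) :
    IsFrameSuperharmonic m (fun z => ∑ j ∈ s, ψ j z) :=
  ⟨ContDiff.sum fun j hj => (hψ j hj).1, fun x v hv => by
    rw [frameLaplacian_sum fun j hj => (hψ j hj).1.contDiffAt]
    exact Finset.sum_nonpos fun j hj => (hψ j hj).2 x v hv⟩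

lemma sum_sq_fderiv_norm_sub_sq_le {ι : Type*} [Fintype ι] {v : ι → V} (hv : Orthonormal ℝ v)
    (x y : V) (t : ℝ) :
    ∑ i, fderiv ℝ (fun z => ‖z - y‖ ^ 2 + t) x (v i) ^ 2 ≤ 4 * ‖x - y‖ ^ 2 := by
  have hD (i : ι) : fderiv ℝ (fun z => ‖z - y‖ ^ 2 + t) x (v i) = 2 * ⟪x - y, v i⟫_ℝ := by
    have hderiv : HasFDerivAt (fun z => ‖z - y‖ ^ 2 + t) _ x :=
      ((hasFDerivAt_id x).sub_const y).norm_sq.add_const t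
    rw [hderiv.fderiv]
    exact (two_nsmul _).trans (two_mul _).symm
  have bessel := hv.sum_inner_products_le (x := x - y) (s := Finset.univ)
  simp only [Real.norm_eq_abs, sq_abs, real_inner_comm (x - y)] at bessel
  simp only [hD, mul_pow, ← Finset.mul_sum]
  linarith

lemma isFrameSuperharmonic_radial {ℓ ℓ' ℓ'' : ℝ → ℝ} (hC2 : ContDiffOn ℝ 2 ℓ (Ioi 0))
    (hℓ : ∀ s > 0, HasDerivAt ℓ (ℓ' s) s) (hℓ' : ∀ s > 0, HasDerivAt ℓ' (ℓ'' s) s)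
    (hconvex : ∀ s > 0, 0 ≤ ℓ'' s) (hle : ∀ s > 0, 2 * s * ℓ'' s + m * ℓ' s ≤ 0)
    {t : ℝ} (ht : 0 < t) (y : V) :
    IsFrameSuperharmonic m (fun z => ℓ (‖z - y‖ ^ 2 + t)) := by
  have hq : ContDiff ℝ 2 fun z : V => ‖z - y‖ ^ 2 :=
    (contDiff_id.sub contDiff_const).norm_sq ℝ
  have hpos (z : V) : 0 < ‖z - y‖ ^ 2 + t := by positivity
  refine ⟨hC2.comp_contDiff (hq.add contDiff_const) hpos, fun x v hv => ?_⟩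
  set s := ‖x - y‖ ^ 2 + t
  have hsum : ∑ i, fderiv ℝ (fun z => ‖z - y‖ ^ 2 + t) x (v i) ^ 2 ≤ 4 * s :=
    (sum_sq_fderiv_norm_sub_sq_le hv x y t).trans (by linarith)
  calc frameLaplacian v (fun z => ℓ (‖z - y‖ ^ 2 + t)) x
    _ = ℓ'' s * ∑ i, fderiv ℝ (fun z => ‖z - y‖ ^ 2 + t) x (v i) ^ 2 + ℓ' s * (2 * m) := by
      rw [frameLaplacian_comp (hq.add contDiff_const).contDiffAt
        (Eventually.of_forall fun z => hℓ _ (hpos z)) (hℓ' _ (hpos x)), frameLaplacian_add_const,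
        frameLaplacian_norm_sub_sq hv, Fintype.card_fin]
    _ ≤ ℓ'' s * (4 * s) + ℓ' s * (2 * m) := by gcongr; exact hconvex s (hpos x)
    _ = 2 * (2 * s * ℓ'' s + m * ℓ' s) := by ring
    _ ≤ 0 := by linarith [hle s (hpos x)]

lemma isFrameSuperharmonic_rpow {a t : ℝ} (ha : 0 ≤ a) (ham : 2 * (a + 1) ≤ m) (ht : 0 < t)
    (y : V) : IsFrameSuperharmonic m (fun z => (‖z - y‖ ^ 2 + t) ^ (-a)) := by
  refine isFrameSuperharmonic_radial (ℓ := fun s => s ^ (-a)) (ℓ' := fun s => -a * s ^ (-a - 1))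
    (ℓ'' := fun s => -a * ((-a - 1) * s ^ (-a - 1 - 1))) ?_ ?_ ?_ ?_ ?_ ht y
  · exact fun s hs => (Real.contDiffAt_rpow_const_of_ne hs.ne').contDiffWithinAt
  · exact fun s hs => Real.hasDerivAt_rpow_const (Or.inl hs.ne')
  · exact fun s hs => (Real.hasDerivAt_rpow_const (Or.inl hs.ne')).const_mul _
  · intro s hs
    rw [show -a * ((-a - 1) * s ^ (-a - 1 - 1)) = a * ((a + 1) * s ^ (-a - 1 - 1)) by ring]
    positivity
  · intro s hs
    have hpow : s * s ^ (-a - 1 - 1) = s ^ (-a - 1) := by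
      rw [mul_comm, ← Real.rpow_add_one hs.ne']
      ring_nf
    calc 2 * s * (-a * ((-a - 1) * s ^ (-a - 1 - 1))) + m * (-a * s ^ (-a - 1))
      _ = -(a * (m - 2 * (a + 1)) * s ^ (-a - 1)) := by rw [← hpow]; ring
      _ ≤ 0 := neg_nonpos.2 (mul_nonneg (mul_nonneg ha (sub_nonneg.2 ham)) (by positivity))

lemma isFrameSuperharmonic_sub_log {t : ℝ} (hm : 2 ≤ m) (ht : 0 < t) (C : ℝ) (y : V) :
    IsFrameSuperharmonic m (fun z => C - Real.log (‖z - y‖ ^ 2 + t)) := by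
  refine isFrameSuperharmonic_radial (ℓ := fun s => C - Real.log s) (ℓ' := fun s => -s⁻¹)
    (ℓ'' := fun s => (s ^ 2)⁻¹) ?_ ?_ ?_ ?_ ?_ ht y
  · exact fun s hs => (contDiffAt_const.sub (Real.contDiffAt_log.2 hs.ne')).contDiffWithinAt
  · exact fun s hs => (Real.hasDerivAt_log hs.ne').const_sub C
  · exact fun s hs => by simpa using (hasDerivAt_inv hs.ne').fun_neg
  · exact fun s hs => by positivity
  · intro s hs
    have hm' : (2 : ℝ) ≤ m := mod_cast hm
    calc 2 * s * (s ^ 2)⁻¹ + m * -s⁻¹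
      _ = -((m - 2) * s⁻¹) := by field_simp; ring
      _ ≤ 0 := neg_nonpos.2 (mul_nonneg (sub_nonneg.2 hm') (by positivity))

end FrameSuperharmonic

/-! ### Polar sets -/

section Polar

variable {V : Type*} [NormedAddCommGroup V] [InnerProductSpace ℝ V] {m : ℕ} {E B : Set V}

/-- Smallness of `E ∩ B` for `m`-superharmonic functions, in the form required by barrier
arguments: for every point `x` off `E` there are such functions, nonnegative on `B`, that are at
least `1` on `B ∩ E` and arbitrarily small at `x`. -/
def IsPolarOn (m : ℕ) (E B : Set V) : Prop :=
  ∀ x ∉ E, ∀ ε > 0, ∃ ψ : V → ℝ, IsFrameSuperharmonic m ψ ∧ (∀ z ∈ B, 0 ≤ ψ z) ∧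
    (∀ z ∈ B ∩ E, 1 ≤ ψ z) ∧ ψ x ≤ ε

lemma isPolarOn_of_forall_exists_le (h : ∀ x ∉ E, ∃ C : ℝ, ∀ M : ℝ, ∃ ψ : V → ℝ,
    IsFrameSuperharmonic m ψ ∧ (∀ z ∈ B, 0 ≤ ψ z) ∧ (∀ z ∈ B ∩ E, M ≤ ψ z) ∧ ψ x ≤ C) :
    IsPolarOn m E B := by
  intro x hx ε hε
  obtain ⟨C, hC⟩ := h x hx
  set M := max 1 (C / ε)
  have hM : 0 < M := zero_lt_one.trans_le (le_max_left _ _)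
  obtain ⟨ψ, hψ, hnonneg, hlarge, hle⟩ := hC M
  refine ⟨fun z => M⁻¹ * ψ z, hψ.const_mul (by positivity),
    fun z hz => mul_nonneg (by positivity) (hnonneg z hz), fun z hz => ?_, ?_⟩
  · simpa only [inv_mul_eq_div, one_le_div hM] using hlarge z hz
  · simp only [inv_mul_eq_div, div_le_iff₀ hM]
    calc ψ x ≤ C := hle
      _ = ε * (C / ε) := by field_simp
      _ ≤ ε * M := by gcongr; exact le_max_right _ _

lemma isPolarOn_of_subset_singleton {y : V} (hm : 2 ≤ m) (hB : Bornology.IsBounded B) (hy : y ∈ E)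
    (hBE : B ∩ E ⊆ {y}) : IsPolarOn m E B := by
  obtain ⟨R, hR⟩ := hB.subset_closedBall y
  refine isPolarOn_of_forall_exists_le fun x hx =>
    ⟨Real.log (R ^ 2 + 1) - Real.log (‖x - y‖ ^ 2), fun M => ?_⟩
  set t := min 1 (Real.exp (-M))
  have ht : 0 < t := lt_min one_pos (Real.exp_pos _)
  have ht1 : t ≤ 1 := min_le_left _ _
  have hlogR : 0 ≤ Real.log (R ^ 2 + 1) := Real.log_nonneg (by nlinarith [sq_nonneg R])
  refine ⟨fun z => Real.log (R ^ 2 + 1) - Real.log (‖z - y‖ ^ 2 + t),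
    isFrameSuperharmonic_sub_log hm ht _ y, fun z hz => ?_, fun z hz => ?_, ?_⟩
  · have hzR : ‖z - y‖ ≤ R := mem_closedBall_iff_norm.1 (hR hz)
    exact sub_nonneg.2 (Real.log_le_log (by positivity) (by gcongr))
  · have hlogt : Real.log t ≤ -M := by
      simpa using Real.log_le_log ht (min_le_right 1 (Real.exp (-M)))
    obtain rfl : z = y := hBE hz
    suffices M ≤ Real.log (R ^ 2 + 1) - Real.log t by simpa
    linarith
  · have hxy : 0 < ‖x - y‖ := norm_pos_iff.2 (sub_ne_zero.2 fun h => hx (h ▸ hy))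
    exact sub_le_sub_left (Real.log_le_log (by positivity) (by linarith)) _

end Polar

/-! ### Discretised Riesz potentials -/

section GridPotential

lemma sq_rpow_neg_half {r : ℝ} (hr : 0 ≤ r) (k : ℕ) :
    (r ^ 2) ^ (-((k : ℝ) / 2)) = (r ^ k)⁻¹ := by
  rw [Real.rpow_neg (by positivity), ← Real.rpow_natCast_mul hr, ← Real.rpow_natCast]
  congr 2
  push_cast
  ring

-- The shell `sup m = s` of the box has at least `(s + 1) ^ (k - 1)` lattice points.
lemma sum_one_div_le_sum_inv_sup_pow {k : ℕ} (hk : 1 ≤ k) (N : ℕ) :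
    ∑ s ∈ Finset.range N, (1 : ℝ) / (s + 1) ≤
      ∑ m ∈ Fintype.piFinset (fun _ : Fin k => Finset.range N),
        ((((Finset.univ.sup m : ℕ) : ℝ) + 1) ^ k)⁻¹ := by
  induction N with
  | zero => simpa using Finset.sum_nonneg fun _ _ => by positivity
  | succ N ih =>
    set P := Fintype.piFinset (fun _ : Fin k => Finset.range N)
    set Q := Fintype.piFinset (fun _ : Fin k => Finset.range (N + 1))
    have hPQ : P ⊆ Q := Fintype.piFinset_subset _ _ fun _ => Finset.range_mono (by simp)
    rw [Finset.sum_range_succ, ← Finset.sum_sdiff hPQ, add_comm]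
    refine add_le_add ?_ ih
    have hterm : ∀ m ∈ Q \ P, (((N : ℝ) + 1) ^ k)⁻¹ ≤
        ((((Finset.univ.sup m : ℕ) : ℝ) + 1) ^ k)⁻¹ := by
      intro m hm
      have hmQ := Fintype.mem_piFinset.1 (Finset.mem_sdiff.1 hm).1
      have : Finset.univ.sup m ≤ N :=
        Finset.sup_le fun i _ => Nat.lt_succ_iff.1 (Finset.mem_range.1 (hmQ i))
      gcongr
    have hcard : ((Q \ P).card : ℝ) = (N + 1) ^ k - N ^ k := by
      rw [Finset.card_sdiff_of_subset hPQ, Nat.cast_sub (Finset.card_le_card hPQ)]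
      simp [P, Q, Fintype.card_piFinset]
    have hratio : ((N : ℝ) / (N + 1)) ^ k ≤ N / (N + 1) :=
      pow_le_of_le_one (by positivity) (by rw [div_le_one] <;> linarith) (by omega)
    calc (1 : ℝ) / (N + 1) = 1 - N / (N + 1) := by field_simp; ring
      _ ≤ 1 - ((N : ℝ) / (N + 1)) ^ k := by linarith
      _ = (Q \ P).card • (((N : ℝ) + 1) ^ k)⁻¹ := by
        rw [nsmul_eq_mul, hcard, div_pow]
        field_simp
      _ ≤ _ := Finset.card_nsmul_le_sum _ _ _ hterm

variable {V : Type*} [NormedAddCommGroup V]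

/-- A discretised Riesz potential of order `k`, regularised at scale `1 / N`, of the image under
`G` of the cube `[0, 2]ᵏ`, with one point mass `N⁻ᵏ` for each node of the grid of mesh `1 / N`. -/
def gridPotential {k : ℕ} (G : (Fin k → ℝ) → V) (N : ℕ) (z : V) : ℝ :=
  ∑ i ∈ Fintype.piFinset (fun _ : Fin k => Finset.range (2 * N)),
    (1 / N : ℝ) ^ k * (‖z - G (fun j => i j / N)‖ ^ 2 + (1 / N) ^ 2) ^ (-((k : ℝ) / 2))

variable {k N : ℕ} {G : (Fin k → ℝ) → V}

lemma gridPotential_nonneg (z : V) : 0 ≤ gridPotential G N z :=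
  Finset.sum_nonneg fun i _ => by positivity

lemma div_mem_Icc_of_mem_piFinset (hN : 0 < N) {i : Fin k → ℕ}
    (hi : i ∈ Fintype.piFinset fun _ => Finset.range (2 * N)) :
    (fun j => (i j : ℝ) / N) ∈ Icc (0 : Fin k → ℝ) 2 := by
  refine ⟨fun j => by simp only [Pi.zero_apply]; positivity, fun j => ?_⟩
  have hij : i j ≤ 2 * N := (Finset.mem_range.1 (Fintype.mem_piFinset.1 hi j)).le
  have hN' : (0 : ℝ) < N := mod_cast hN
  exact (div_le_iff₀ hN').2 (mod_cast hij : (i j : ℝ) ≤ 2 * N)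

lemma gridPotential_le (hN : 0 < N) {d : ℝ} (hd : 0 < d) {x : V}
    (hx : ∀ w ∈ Icc (0 : Fin k → ℝ) 2, d ≤ ‖x - G w‖) : gridPotential G N x ≤ (2 / d) ^ k := by
  have hterm : ∀ i ∈ Fintype.piFinset (fun _ : Fin k => Finset.range (2 * N)),
      (1 / N : ℝ) ^ k * (‖x - G (fun j => i j / N)‖ ^ 2 + (1 / N) ^ 2) ^ (-((k : ℝ) / 2)) ≤
        (1 / N) ^ k * (d ^ k)⁻¹ := by
    intro i hi
    rw [← sq_rpow_neg_half hd.le]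
    have hdist := hx _ (div_mem_Icc_of_mem_piFinset hN hi)
    exact mul_le_mul_of_nonneg_left
      (Real.rpow_le_rpow_of_nonpos (by positivity) (by nlinarith [sq_nonneg (1 / N : ℝ)])
        (neg_nonpos.2 (by positivity))) (by positivity)
  refine (Finset.sum_le_card_nsmul _ _ _ hterm).trans_eq ?_
  simp only [Fintype.card_piFinset, Finset.card_range, Finset.prod_const, Finset.card_univ,
    Fintype.card_fin, nsmul_eq_mul]
  push_cast
  rw [← inv_pow, ← mul_pow, ← mul_pow]
  field_simp

lemma norm_sub_floor_add_div_le (hN : 0 < N) {w : Fin k → ℝ} (hw : 0 ≤ w) (m : Fin k → ℕ) :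
    ‖w - fun j => ((⌊N * w j⌋₊ + m j : ℕ) : ℝ) / N‖ ≤ (1 / N) * ((Finset.univ.sup m : ℕ) + 1) := by
  have hN' : (0 : ℝ) < N := mod_cast hN
  refine (pi_norm_le_iff_of_nonneg (by positivity)).2 fun j => ?_
  have hfloor := Nat.floor_le (mul_nonneg hN'.le (hw j))
  have hlt := Nat.lt_floor_add_one (N * w j)
  have hm : (m j : ℝ) ≤ (Finset.univ.sup m : ℕ) := mod_cast Finset.le_sup (Finset.mem_univ j)
  rw [Pi.sub_apply, Real.norm_eq_abs, show w j - ((⌊N * w j⌋₊ + m j : ℕ) : ℝ) / N =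
    (1 / N) * (N * w j - ⌊N * w j⌋₊ - m j) by push_cast; field_simp; ring, abs_mul,
    abs_of_pos (by positivity : 0 < 1 / (N : ℝ))]
  gcongr
  rw [abs_le]
  constructor <;> linarith [(m j).cast_nonneg (α := ℝ)]

lemma floor_add_mem_piFinset {w : Fin k → ℝ} (hw : w ≤ 1) {m : Fin k → ℕ}
    (hm : m ∈ Fintype.piFinset fun _ => Finset.range N) :
    (fun j => ⌊N * w j⌋₊ + m j) ∈ Fintype.piFinset fun _ => Finset.range (2 * N) := by
  refine Fintype.mem_piFinset.2 fun j => Finset.mem_range.2 ?_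
  have hmj := Finset.mem_range.1 (Fintype.mem_piFinset.1 hm j)
  have hfloor : ⌊N * w j⌋₊ ≤ N :=
    Nat.floor_le_of_le (mul_le_of_le_one_right (by positivity) (hw j))
  omega

lemma inv_pow_mul_inv_pow_le_rpow {L S τ b : ℝ} (hL : 0 ≤ L) (hS : 1 ≤ S) (hτ : 0 < τ)
    (hb₀ : 0 ≤ b) (hb : b ≤ L * (τ * S)) :
    ((L + 1) ^ k)⁻¹ * (S ^ k)⁻¹ ≤ τ ^ k * (b ^ 2 + τ ^ 2) ^ (-((k : ℝ) / 2)) := by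
  have hτS : τ ≤ τ * S := le_mul_of_one_le_right hτ.le hS
  have hbase : b ^ 2 + τ ^ 2 ≤ ((L + 1) * (τ * S)) ^ 2 := by
    calc b ^ 2 + τ ^ 2 ≤ (b + τ) ^ 2 := by nlinarith
      _ ≤ ((L + 1) * (τ * S)) ^ 2 := by gcongr; linarith
  calc ((L + 1) ^ k)⁻¹ * (S ^ k)⁻¹
    _ = τ ^ k * (((L + 1) * (τ * S)) ^ 2) ^ (-((k : ℝ) / 2)) := by
      rw [sq_rpow_neg_half (by positivity), mul_pow, mul_pow]
      field_simp
    _ ≤ _ := mul_le_mul_of_nonneg_left (Real.rpow_le_rpow_of_nonpos (by positivity) hbase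
      (neg_nonpos.2 (by positivity))) (by positivity)

lemma le_gridPotential_apply {L : NNReal} (hk : 1 ≤ k) (hN : 0 < N)
    (hG : LipschitzOnWith L G (Icc 0 2)) {w : Fin k → ℝ} (hw : w ∈ Icc 0 1) :
    ((L + 1 : ℝ) ^ k)⁻¹ * ∑ s ∈ Finset.range N, (1 : ℝ) / (s + 1) ≤ gridPotential G N (G w) := by
  set P := Fintype.piFinset (fun _ : Fin k => Finset.range N)
  set shift : (Fin k → ℕ) → Fin k → ℕ := fun m j => ⌊N * w j⌋₊ + m j
  have hw2 : w ∈ Icc (0 : Fin k → ℝ) 2 :=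
    ⟨hw.1, fun j => (hw.2 j).trans (by norm_num)⟩
  have hterm : ∀ m ∈ P, ((L + 1 : ℝ) ^ k)⁻¹ * ((((Finset.univ.sup m : ℕ) : ℝ) + 1) ^ k)⁻¹ ≤
      (1 / N : ℝ) ^ k *
        (‖G w - G (fun j => shift m j / N)‖ ^ 2 + (1 / N) ^ 2) ^ (-((k : ℝ) / 2)) := by
    intro m hm
    have hmem := div_mem_Icc_of_mem_piFinset hN (floor_add_mem_piFinset hw.2 hm)
    refine inv_pow_mul_inv_pow_le_rpow L.2 (by simp) (by positivity) (norm_nonneg _)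
      ((hG.norm_sub_le hw2 hmem).trans ?_)
    exact mul_le_mul_of_nonneg_left (norm_sub_floor_add_div_le hN hw.1 m) L.2
  have hinj : Set.InjOn shift P := fun a _ b _ hab =>
    funext fun j => Nat.add_left_cancel (congrFun hab j)
  calc ((L + 1 : ℝ) ^ k)⁻¹ * ∑ s ∈ Finset.range N, (1 : ℝ) / (s + 1)
    _ ≤ ((L + 1 : ℝ) ^ k)⁻¹ * ∑ m ∈ P, ((((Finset.univ.sup m : ℕ) : ℝ) + 1) ^ k)⁻¹ := by
      gcongr
      exact sum_one_div_le_sum_inv_sup_pow hk N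
    _ ≤ ∑ m ∈ P, _ := by
      rw [Finset.mul_sum]
      exact Finset.sum_le_sum hterm
    _ = ∑ i ∈ P.image shift, (1 / N : ℝ) ^ k *
        (‖G w - G (fun j => i j / N)‖ ^ 2 + (1 / N) ^ 2) ^ (-((k : ℝ) / 2)) :=
      (Finset.sum_image hinj).symm
    _ ≤ gridPotential G N (G w) := Finset.sum_le_sum_of_subset_of_nonneg
      (Finset.image_subset_iff.2 fun m hm => floor_add_mem_piFinset hw.2 hm)
      fun i _ _ => by positivity

variable [InnerProductSpace ℝ V]

lemma isFrameSuperharmonic_gridPotential (hN : 0 < N) :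
    IsFrameSuperharmonic (k + 2) (gridPotential G N) :=
  .sum fun i _ => (isFrameSuperharmonic_rpow (by positivity) (by push_cast; linarith)
    (by positivity) _).const_mul (by positivity)

lemma isPolarOn_of_lipschitz_image_cube {E B : Set V} {L : NNReal}
    (hE : IsClosed E) (hB : Bornology.IsBounded B) (hG : LipschitzOnWith L G (Icc 0 2))
    (hGE : MapsTo G (Icc 0 2) E) (hBE : B ∩ E ⊆ G '' Icc 0 1) : IsPolarOn (k + 2) E B := by
  rcases k.eq_zero_or_pos with rfl | hk
  · refine isPolarOn_of_subset_singleton (y := G 0) le_rfl hB (hGE ⟨le_rfl, by simp⟩) ?_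
    rintro z hz
    obtain ⟨w, -, rfl⟩ := hBE hz
    rw [Subsingleton.elim w 0, mem_singleton_iff]
  refine isPolarOn_of_forall_exists_le fun x hx => ?_
  obtain ⟨d, hd, hball⟩ := Metric.isOpen_iff.1 hE.isOpen_compl x hx
  have hfar : ∀ w ∈ Icc (0 : Fin k → ℝ) 2, d ≤ ‖x - G w‖ := fun w hw => by
    by_contra! hlt
    exact hball (by rwa [mem_ball', dist_eq_norm]) (hGE hw)
  refine ⟨(2 / d) ^ k, fun M => ?_⟩
  obtain ⟨N, hM, hN⟩ := ((Real.tendsto_sum_range_one_div_nat_succ_atTop.eventually_ge_atTop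
    ((L + 1 : ℝ) ^ k * M)).and (eventually_gt_atTop 0)).exists
  refine ⟨gridPotential G N, isFrameSuperharmonic_gridPotential hN,
    fun z _ => gridPotential_nonneg z, fun z hz => ?_, gridPotential_le hN hd hfar⟩
  obtain ⟨w, hw, rfl⟩ := hBE hz
  refine le_trans ?_ (le_gridPotential_apply hk hN hG hw)
  rwa [inv_mul_eq_div, le_div_iff₀ (by positivity), mul_comm]

lemma isPolarOn_of_lipschitz_image_closedBall {E B : Set V} {L : NNReal} {r : ℝ} (hr : 0 < r)
    (hE : IsClosed E) (hB : Bornology.IsBounded B) (hG : LipschitzOnWith L G (closedBall 0 (3 * r)))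
    (hGE : MapsTo G (closedBall 0 (3 * r)) E) (hBE : B ∩ E ⊆ G '' closedBall 0 r) :
    IsPolarOn (k + 2) E B := by
  let A (w : Fin k → ℝ) : Fin k → ℝ := fun j => r * (2 * w j - 1)
  have hA : LipschitzWith (Real.toNNReal (2 * r)) A := by
    refine LipschitzWith.of_dist_le_mul fun w w' => ?_
    rw [Real.coe_toNNReal _ (by positivity), dist_pi_le_iff (by positivity)]
    intro j
    calc dist (A w j) (A w' j) = 2 * r * dist (w j) (w' j) := by
          rw [Real.dist_eq, Real.dist_eq, ← abs_of_pos (show 0 < 2 * r by positivity), ← abs_mul]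
          congr 1
          simp only [A]
          ring
      _ ≤ 2 * r * dist w w' := by gcongr; exact dist_le_pi_dist w w' j
  have hmaps : MapsTo A (Icc 0 2) (closedBall 0 (3 * r)) := by
    intro w hw
    rw [mem_closedBall_zero_iff, pi_norm_le_iff_of_nonneg (by positivity)]
    intro j
    have h0 : 0 ≤ w j := hw.1 j
    have h2 : w j ≤ 2 := hw.2 j
    rw [Real.norm_eq_abs, abs_le]
    constructor <;> simp only [A] <;> nlinarith
  have hsurj : closedBall 0 r ⊆ A '' Icc 0 1 := by
    intro v hv
    rw [mem_closedBall_zero_iff, pi_norm_le_iff_of_nonneg hr.le] at hv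
    have hvj (j : Fin k) : -1 ≤ v j / r ∧ v j / r ≤ 1 := by
      rw [le_div_iff₀ hr, div_le_one hr]
      constructor <;> linarith [abs_le.1 (hv j)]
    refine ⟨fun j => (v j / r + 1) / 2, ⟨fun j => ?_, fun j => ?_⟩, funext fun j => ?_⟩
    · simp only [Pi.zero_apply]; linarith [hvj j]
    · simp only [Pi.one_apply]; linarith [hvj j]
    · simp only [A]; field_simp; ring
  exact isPolarOn_of_lipschitz_image_cube hE hB (hG.comp hA.lipschitzOnWith hmaps)
    (hGE.comp hmaps) (by rw [image_comp]; exact hBE.trans (image_mono hsurj))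

end GridPotential

/-! ### Submanifolds -/

lemma injective_fderiv_of_eventually_leftInverse {V W : Type*} [NormedAddCommGroup V]
    [NormedSpace ℝ V] [NormedAddCommGroup W] [NormedSpace ℝ W] {f : V → W} {g : W → V} {x : V}
    (hf : DifferentiableAt ℝ f x) (hg : DifferentiableAt ℝ g (f x))
    (hgf : ∀ᶠ z in 𝓝 x, g (f z) = z) : Function.Injective (fderiv ℝ f x) := by
  have hcomp : (fderiv ℝ g (f x)).comp (fderiv ℝ f x) = .id ℝ V :=
    ((hg.hasFDerivAt.comp x hf.hasFDerivAt).congr_of_eventuallyEq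
      (hgf.mono fun _ hz => hz.symm)).unique (hasFDerivAt_id x)
  exact Function.LeftInverse.injective fun w => DFunLike.congr_fun hcomp w

section Submanifold

variable {V : Type*} [NormedAddCommGroup V] [InnerProductSpace ℝ V] [FiniteDimensional ℝ V]
  {k : ℕ} {E : Set V} {x : V}

/-- `E` is an embedded `k`-dimensional `C²` submanifold near `x`: some `C²` diffeomorphism defined
near `x` carries `E` to a `k`-dimensional linear subspace. -/
def IsC2SubmanifoldAt (k : ℕ) (E : Set V) (x : V) : Prop :=
  ∃ (e : OpenPartialHomeomorph V V) (S : Submodule ℝ V), x ∈ e.source ∧ finrank ℝ S = k ∧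
    ContDiffOn ℝ 2 e e.source ∧ ContDiffOn ℝ 2 e.symm e.target ∧ e.IsImage E S

lemma IsC2SubmanifoldAt.exists_defining_map (h : IsC2SubmanifoldAt k E x) :
    ∃ Φ : V → V, ContDiffAt ℝ 2 Φ x ∧ (∀ᶠ z in 𝓝 x, z ∈ E → Φ z = 0) ∧
      finrank ℝ (fderiv ℝ Φ x).ker ≤ k := by
  obtain ⟨e, S, hx, hS, he, hsymm, himage⟩ := h
  have hsource := e.open_source.mem_nhds hx
  have he' : ContDiffAt ℝ 2 e x := he.contDiffAt hsource
  have hed : DifferentiableAt ℝ e x := he'.differentiableAt two_ne_zero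
  have hsymmd : DifferentiableAt ℝ e.symm (e x) :=
    (hsymm.contDiffAt (e.open_target.mem_nhds (e.map_source hx))).differentiableAt two_ne_zero
  refine ⟨fun z => Sᗮ.starProjection (e z), Sᗮ.starProjection.contDiff.contDiffAt.comp x he',
    ?_, ?_⟩
  · filter_upwards [hsource] with z hz hzE
    rw [Submodule.starProjection_apply_eq_zero_iff, Submodule.orthogonal_orthogonal]
    exact (himage hz).2 hzE
  · have hDΦ : fderiv ℝ (fun z => Sᗮ.starProjection (e z)) x =
        Sᗮ.starProjection.comp (fderiv ℝ e x) :=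
      (Sᗮ.starProjection.hasFDerivAt.comp x hed.hasFDerivAt).fderiv
    have hmaps : ∀ w ∈ (fderiv ℝ (fun z => Sᗮ.starProjection (e z)) x).ker,
        fderiv ℝ e x w ∈ S := by
      intro w hw
      have hproj : Sᗮ.starProjection (fderiv ℝ e x w) = 0 := by rw [hDΦ] at hw; exact hw
      rwa [Submodule.starProjection_apply_eq_zero_iff, Submodule.orthogonal_orthogonal] at hproj
    have hinj := injective_fderiv_of_eventually_leftInverse hed hsymmd
      (mem_of_superset hsource fun z hz => e.left_inv hz)
    rw [← hS]
    exact LinearMap.finrank_le_finrank_of_injective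
      (f := (fderiv ℝ e x).toLinearMap.restrict hmaps)
      fun a b hab => Subtype.ext (hinj (congrArg Subtype.val hab))

lemma IsC2SubmanifoldAt.exists_lipschitz_param (h : IsC2SubmanifoldAt k E x) (hxE : x ∈ E) :
    ∃ (G : (Fin k → ℝ) → V) (L : NNReal), ∃ t ∈ 𝓝 0, LipschitzOnWith L G t ∧ MapsTo G t E ∧
      ∀ s ∈ 𝓝 0, G '' s ∈ 𝓝[E] x := by
  obtain ⟨e, S, hx, hS, _, hsymm, himage⟩ := h
  have hexS : e x ∈ S := (himage hx).2 hxE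
  have htarget := e.open_target.mem_nhds (e.map_source hx)
  let I : (Fin k → ℝ) ≃L[ℝ] S := ContinuousLinearEquiv.ofFinrankEq (by simp [hS])
  have hA : ContDiff ℝ 2 fun w => e x + (I w : V) :=
    contDiff_const.add (S.subtypeL.comp I.toContinuousLinearMap).contDiff
  have hA0 : e x + (I 0 : V) = e x := by simp
  have hG : ContDiffAt ℝ 1 (fun w => e.symm (e x + (I w : V))) 0 :=
    (ContDiffAt.comp 0 (hA0.symm ▸ hsymm.contDiffAt htarget) hA.contDiffAt).of_le one_le_two
  obtain ⟨L, t, ht, hL⟩ := hG.exists_lipschitzOnWith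
  have htarget' : ∀ᶠ w in 𝓝 0, e x + (I w : V) ∈ e.target :=
    (hA.continuous.tendsto' 0 (e x) hA0).eventually htarget
  refine ⟨_, L, t ∩ {w | e x + (I w : V) ∈ e.target}, inter_mem ht htarget',
    hL.mono inter_subset_left, fun w hw => ?_, fun s hs => ?_⟩
  · refine (himage (e.map_target hw.2)).1 ?_
    rw [e.right_inv hw.2]
    exact S.add_mem hexS (I w).2
  · let coord (y : V) : Fin k → ℝ := I.symm (S.orthogonalProjectionOnto (e y - e x))
    have hcoord : ∀ᶠ y in 𝓝 x, coord y ∈ s := by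
      have hcont : ContinuousAt coord x := I.symm.continuous.continuousAt.comp
        (S.orthogonalProjectionOnto.continuous.continuousAt.comp
          ((e.continuousAt hx).sub continuousAt_const))
      exact hcont.eventually (by simpa [coord] using hs)
    filter_upwards [nhdsWithin_le_nhds hcoord, nhdsWithin_le_nhds (e.open_source.mem_nhds hx),
      self_mem_nhdsWithin] with y hy hysource hyE
    refine ⟨coord y, hy, ?_⟩
    have hproj := Submodule.starProjection_eq_self_iff.2
      (S.sub_mem ((himage hysource).2 hyE) hexS)
    change e.symm (e x + (I (I.symm (S.orthogonalProjectionOnto (e y - e x))) : V)) = y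
    rw [I.apply_symm_apply, ← Submodule.starProjection_apply, hproj, add_sub_cancel,
      e.left_inv hysource]

lemma IsC2SubmanifoldAt.exists_isPolarOn (h : IsC2SubmanifoldAt k E x) (hE : IsClosed E)
    (hxE : x ∈ E) : ∃ B ∈ 𝓝 x, IsPolarOn (k + 2) E B := by
  obtain ⟨G, L, t, ht, hL, hGE, hcover⟩ := h.exists_lipschitz_param hxE
  obtain ⟨r, hr, hrt⟩ := Metric.nhds_basis_closedBall.mem_iff.1 ht
  have hr3 : closedBall 0 (3 * (r / 3)) ⊆ t := by rwa [mul_div_cancel₀ r three_ne_zero]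
  obtain ⟨B, hB, hBE⟩ := mem_nhdsWithin_iff_exists_mem_nhds_inter.1
    (hcover _ (closedBall_mem_nhds 0 (div_pos hr three_pos)))
  exact ⟨B ∩ ball x 1, inter_mem hB (ball_mem_nhds x one_pos),
    isPolarOn_of_lipschitz_image_closedBall (div_pos hr three_pos) hE
      (isBounded_ball.subset inter_subset_right) (hL.mono hr3) (hGE.mono_left hr3)
      fun y hy => hBE ⟨hy.1.1, hy.2⟩⟩

end Submanifold

lemma exists_submodule_coe_eq_setOf_forall_eq_zero {n k : ℕ} (hk : k ≤ n) :
    ∃ S : Submodule ℝ (En n), finrank ℝ S = k ∧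
      (S : Set (En n)) = {z | ∀ i : Fin n, k ≤ (i : ℕ) → z i = 0} := by
  let extend : (Fin k → ℝ) →ₗ[ℝ] En n :=
    (WithLp.linearEquiv 2 ℝ (Fin n → ℝ)).symm.toLinearMap ∘ₗ
      Function.ExtendByZero.linearMap ℝ (Fin.castLE hk)
  have extend_castLE (w : Fin k → ℝ) (j : Fin k) : extend w (Fin.castLE hk j) = w j :=
    (Fin.castLE_injective hk).extend_apply w 0 j
  have extend_of_le (w : Fin k → ℝ) (i : Fin n) (hi : k ≤ i) : extend w i = 0 :=
    Function.extend_apply' _ _ _ fun ⟨j, hj⟩ => by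
      rw [← hj, Fin.val_castLE] at hi
      omega
  refine ⟨LinearMap.range extend, ?_, Subset.antisymm ?_ fun z hz => ?_⟩
  · rw [LinearMap.finrank_range_of_inj, finrank_fin_fun]
    exact fun w w' h => funext fun j => by rw [← extend_castLE w, h, extend_castLE]
  · rintro _ ⟨w, rfl⟩
    exact extend_of_le w
  · refine ⟨fun j => z (Fin.castLE hk j), ?_⟩
    ext i
    by_cases hi : (i : ℕ) < k
    · exact extend_castLE _ ⟨i, hi⟩
    · rw [extend_of_le _ _ (not_lt.1 hi), hz i (not_lt.1 hi)]

lemma IsSmoothClosedSubmanifold.isC2SubmanifoldAt {n k : ℕ} {E : Set (En n)} {x : En n}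
    (hE : IsSmoothClosedSubmanifold k E) (hk : k ≤ n) (hx : x ∈ E) : IsC2SubmanifoldAt k E x := by
  obtain ⟨U, V, φ, ψ, hU, hV, hxU, hφ, hψ, hmapφ, hmapψ, hleft, hright, himage⟩ := hE.2 x hx
  obtain ⟨S, hS, hScoe⟩ := exists_submodule_coe_eq_setOf_forall_eq_zero hk
  rw [← hScoe] at himage
  let e : OpenPartialHomeomorph (En n) (En n) :=
    { toFun := φ, invFun := ψ, source := U, target := V, map_source' := hmapφ,
      map_target' := hmapψ, left_inv' := hleft, right_inv' := hright, open_source := hU,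
      open_target := hV, continuousOn_toFun := hφ.continuousOn,
      continuousOn_invFun := hψ.continuousOn }
  have two_le : (2 : WithTop ℕ∞) ≤ ((⊤ : ℕ∞) : WithTop ℕ∞) := WithTop.coe_le_coe.2 le_top
  refine ⟨e, S, hxU, hS, hφ.of_le two_le, hψ.of_le two_le,
    fun y hy => ⟨fun hyS => ?_, fun hyE => ?_⟩⟩
  · obtain ⟨z, hz, hzy⟩ := himage.ge ⟨hmapφ hy, hyS⟩
    rw [← hleft y hy, ← show φ z = φ y from hzy, hleft z hz.2]
    exact hz.1
  · exact (himage.le (mem_image_of_mem φ ⟨hyE, hy⟩)).2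

/-! ### Second-order operators on test functions -/

lemma exists_contDiff_eventuallyEq {V : Type*} [NormedAddCommGroup V] [NormedSpace ℝ V]
    [HasContDiffBump V] {m : ℕ} {φ : V → ℝ} {x : V} (hφ : ContDiffAt ℝ m φ x) :
    ∃ φ' : V → ℝ, ContDiff ℝ m φ' ∧ φ' =ᶠ[𝓝 x] φ := by
  obtain ⟨r, hr, hsub⟩ := nhds_basis_closedBall.mem_iff.1 (hφ.eventually (by simp))
  let χ : ContDiffBump x := ⟨r / 2, r, half_pos hr, half_lt_self hr⟩
  refine ⟨fun z => χ z * φ z, contDiff_iff_contDiffAt.2 fun z => ?_, ?_⟩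
  · by_cases hz : z ∈ tsupport χ
    · exact χ.contDiffAt.mul (hsub (χ.tsupport_eq ▸ hz))
    · refine (contDiffAt_const (c := 0)).congr_of_eventuallyEq ?_
      filter_upwards [notMem_tsupport_iff_eventuallyEq.1 hz] with y hy
      simp [hy]
  · filter_upwards [χ.eventuallyEq_one] with z hz
    simp [hz]

lemma contDiffAt_uncurry_fderiv {P V W : Type*} [NormedAddCommGroup P] [NormedSpace ℝ P]
    [NormedAddCommGroup V] [NormedSpace ℝ V] [NormedAddCommGroup W] [NormedSpace ℝ W]
    {H : P → V → W} {p : P} {x : V} {l m : WithTop ℕ∞}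
    (hH : ContDiffAt ℝ m (Function.uncurry H) (p, x)) (hlm : l + 1 ≤ m) :
    ContDiffAt ℝ l (Function.uncurry fun q => fderiv ℝ (H q)) (p, x) := by
  have hH' : ContDiffAt ℝ m (Function.uncurry fun z : P × V => H z.1) ((p, x), x) :=
    ContDiffAt.comp ((p, x), x) (f := fun w : (P × V) × V => (w.1.1, w.2)) hH (by fun_prop)
  exact hH'.fderiv contDiffAt_snd hlm

section JetEval

variable {n : ℕ} {Ω : Set (En n)} {F : En n → ℝ → En n → Matrix (Fin n) (Fin n) ℝ → ℝ}
  {f : En n → ℝ} {g h : En n → ℝ} {x : En n}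

/-- The value `F(x, g(x), ∇g(x), ∇²g(x))` of a second-order operator on a function `g`. -/
def jetEval (F : En n → ℝ → En n → Matrix (Fin n) (Fin n) ℝ → ℝ) (g : En n → ℝ) (x : En n) : ℝ :=
  F x (g x) (gradient g x) (hess g x)

lemma jetEval_congr (hgh : g =ᶠ[𝓝 x] h) : jetEval F g x = jetEval F h x := by
  simp only [jetEval, hess, gradient, hgh.eq_of_nhds, hgh.fderiv_eq,
    (hgh.iteratedFDeriv ℝ 2).eq_of_nhds]

variable {P : Type*} [NormedAddCommGroup P] [NormedSpace ℝ P] {H : P → En n → ℝ} {p : P}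

lemma continuousAt_jetEval
    (hF : ContinuousAt
      (fun q : En n × ℝ × En n × Matrix (Fin n) (Fin n) ℝ => F q.1 q.2.1 q.2.2.1 q.2.2.2)
      (x, H p x, gradient (H p) x, hess (H p) x))
    (hH : ContDiffAt ℝ 2 (Function.uncurry H) (p, x)) :
    ContinuousAt (fun z : P × En n => jetEval F (H z.1) z.2) (p, x) := by
  have hDH : ContDiffAt ℝ 1 (Function.uncurry fun q => fderiv ℝ (H q)) (p, x) :=
    contDiffAt_uncurry_fderiv hH (by norm_num)
  have hD2H : ContDiffAt ℝ 0 (Function.uncurry fun q => fderiv ℝ (fderiv ℝ (H q))) (p, x) :=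
    contDiffAt_uncurry_fderiv hDH (by norm_num)
  have hgrad : ContinuousAt (fun z : P × En n => gradient (H z.1) z.2) (p, x) :=
    (InnerProductSpace.toDual ℝ (En n)).symm.continuous.continuousAt.comp hDH.continuousAt
  have hhess : ContinuousAt (fun z : P × En n => hess (H z.1) z.2) (p, x) := by
    refine continuousAt_pi.2 fun i => continuousAt_pi.2 fun j => ?_
    simp only [hess_apply]
    exact (hD2H.continuousAt.clm_apply continuousAt_const).clm_apply continuousAt_const
  exact ContinuousAt.comp (x := (p, x))
    (f := fun z : P × En n => (z.2, H z.1 z.2, gradient (H z.1) z.2, hess (H z.1) z.2)) hF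
    (continuousAt_snd.prodMk (hH.continuousAt.prodMk (hgrad.prodMk hhess)))

lemma eventually_lt_jetEval (hΩ : IsOpen Ω) (hx : x ∈ Ω)
    (hF : ContinuousOn
      (fun q : En n × ℝ × En n × Matrix (Fin n) (Fin n) ℝ => F q.1 q.2.1 q.2.2.1 q.2.2.2)
      {q | q.1 ∈ Ω})
    (hf : UpperSemicontinuousOn f Ω) (hH : ContDiffAt ℝ 2 (Function.uncurry H) (p, x))
    (hlt : f x < jetEval F (H p) x) :
    ∀ᶠ z : P × En n in 𝓝 (p, x), f z.2 < jetEval F (H z.1) z.2 := by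
  obtain ⟨μ, hfμ, hμ⟩ := exists_between hlt
  have hfμ' : ∀ᶠ y in 𝓝 x, f y < μ := by
    rw [← hΩ.nhdsWithin_eq hx]
    exact hf x hx μ hfμ
  have hFx := hF.continuousAt ((hΩ.preimage continuous_fst).mem_nhds
    (show (x, H p x, gradient (H p) x, hess (H p) x).1 ∈ Ω from hx))
  filter_upwards [(continuousAt_jetEval hFx hH).eventually (lt_mem_nhds hμ),
    continuousAt_snd.eventually hfμ'] with z hμz hfz using hfz.trans hμz

lemma exists_pos_lt_jetEval_sub_norm_sq (hΩ : IsOpen Ω) (hx : x ∈ Ω)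
    (hF : ContinuousOn
      (fun q : En n × ℝ × En n × Matrix (Fin n) (Fin n) ℝ => F q.1 q.2.1 q.2.2.1 q.2.2.2)
      {q | q.1 ∈ Ω})
    (hf : UpperSemicontinuousOn f Ω) (hg : ContDiffAt ℝ 2 g x) (hlt : f x < jetEval F g x) :
    ∃ δ > 0, f x < jetEval F (fun z => g z - δ * ‖z - x‖ ^ 2) x := by
  have hH : ContDiffAt ℝ 2 (Function.uncurry fun (δ : ℝ) z => g z - δ * ‖z - x‖ ^ 2) (0, x) :=
    (hg.comp (0, x) contDiffAt_snd).sub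
      (contDiffAt_fst.mul ((contDiffAt_snd.sub contDiffAt_const).norm_sq ℝ))
  have key := eventually_lt_jetEval hΩ hx hF hf hH (by simpa using hlt)
  have hδ : ∀ᶠ δ in 𝓝[>] (0 : ℝ), f x < jetEval F (fun z => g z - δ * ‖z - x‖ ^ 2) x :=
    nhdsWithin_le_nhds ((Continuous.prodMk_left x).continuousAt.eventually key)
  obtain ⟨δ, hlt, hpos⟩ := (hδ.and self_mem_nhdsWithin).exists
  exact ⟨δ, hpos, hlt⟩

end JetEval

/-! ### Comparison for viscosity supersolutions -/

lemma exists_isMinOn_of_continuousOn_le {X : Type*} [TopologicalSpace X] [T2Space X] {K O : Set X}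
    {w h : X → ℝ} {z : X} (hK : IsCompact K) (hw : LowerSemicontinuousOn w (K ∩ O))
    (hh : ContinuousOn h K) (hle : ∀ x ∈ K ∩ O, h x ≤ w x) (hnonneg : ∀ x ∈ K \ O, 0 ≤ h x)
    (hz : z ∈ K ∩ O) (hneg : w z < 0) :
    ∃ y ∈ K ∩ O, w y < 0 ∧ IsMinOn w (K ∩ O) y := by
  have hK' : IsCompact (K ∩ h ⁻¹' Iic (w z)) :=
    hK.of_isClosed_subset (hh.preimage_isClosed_of_isClosed hK.isClosed isClosed_Iic)
      inter_subset_left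
  have hsub : K ∩ h ⁻¹' Iic (w z) ⊆ K ∩ O := fun x hx =>
    ⟨hx.1, by_contra fun hxO => (hnonneg x ⟨hx.1, hxO⟩).not_gt (hx.2.trans_lt hneg)⟩
  have hzK' : z ∈ K ∩ h ⁻¹' Iic (w z) := ⟨hz.1, hle z hz⟩
  obtain ⟨y, hy, hmin⟩ := (hw.mono hsub).exists_isMinOn ⟨z, hzK'⟩ hK'
  have hyz : w y ≤ w z := hmin hzK'
  refine ⟨y, hsub hy, hyz.trans_lt hneg, fun x hx => ?_⟩
  rcases le_total (h x) (w z) with hxz | hxz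
  · exact hmin ⟨hx.1, hxz⟩
  · exact hyz.trans (hxz.trans (hle x hx))

namespace IsViscositySupersolution

variable {n : ℕ} {Ω E O : Set (En n)} {F : En n → ℝ → En n → Matrix (Fin n) (Fin n) ℝ → ℝ}
  {f u φ g β : En n → ℝ} {x₀ : En n} {δ R : ℝ}

lemma jetEval_le_of_contDiffAt (hu : IsViscositySupersolution F f O u) (hx₀ : x₀ ∈ O)
    (hφ : ContDiffAt ℝ 2 φ x₀) (heq : u x₀ = φ x₀) (hle : ∀ᶠ x in 𝓝[O] x₀, φ x ≤ u x) :
    jetEval F φ x₀ ≤ f x₀ := by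
  obtain ⟨φ', hφ', hcongr⟩ := exists_contDiff_eventuallyEq (m := 2) hφ
  have heq' : u x₀ = φ' x₀ := heq.trans hcongr.eq_of_nhds.symm
  rw [← jetEval_congr hcongr]
  refine hu φ' hφ'.contDiffOn x₀ hx₀ heq' ?_
  filter_upwards [hle, nhdsWithin_le_nhds hcongr] with x hx hφx
  rw [heq', hφx, sub_self]
  exact sub_nonneg.2 hx

lemma add_le_of_barrier (hu : IsViscositySupersolution F f (Ω \ E) u)
    (hlsc : LowerSemicontinuousOn u (Ω \ E)) (hball : closedBall x₀ R ⊆ Ω)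
    (hg : ∀ x ∈ closedBall x₀ R, ContDiffAt ℝ 2 g x)
    (hβ : ∀ x ∈ closedBall x₀ R, ContDiffAt ℝ 2 β x) (hδ : 0 ≤ δ)
    (hlow : ∀ x ∈ closedBall x₀ R \ E, g x + δ * ‖x - x₀‖ ^ 2 ≤ u x)
    (hβE : ∀ x ∈ closedBall x₀ R ∩ E, β x ≤ 0) (hβS : ∀ x ∈ sphere x₀ R, β x ≤ δ * R ^ 2)
    (hstrict : ∀ y ∈ ball x₀ R, ∀ c < 0, -β y ≤ c → f y < jetEval F (fun x => g x + β x + c) y) :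
    ∀ x ∈ ball x₀ R \ E, g x + β x ≤ u x := by
  by_contra! hcontra
  obtain ⟨z, hz, huz⟩ := hcontra
  have hsub : closedBall x₀ R ∩ (ball x₀ R \ E) ⊆ Ω \ E := fun x hx => ⟨hball hx.1, hx.2.2⟩
  have hθ (x) (hx : x ∈ closedBall x₀ R) : ContDiffAt ℝ 2 (fun x => g x + β x) x :=
    (hg x hx).add (hβ x hx)
  have hlsc' : LowerSemicontinuousOn (fun x => u x + -(g x + β x))
      (closedBall x₀ R ∩ (ball x₀ R \ E)) :=
    (hlsc.mono hsub).add (ContinuousOn.lowerSemicontinuousOn fun x hx =>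
      (hθ x hx.1).continuousAt.neg.continuousWithinAt)
  have hnonneg : ∀ x ∈ closedBall x₀ R \ (ball x₀ R \ E), 0 ≤ δ * ‖x - x₀‖ ^ 2 - β x := by
    intro x hx
    by_cases hxE : x ∈ E
    · linarith [hβE x ⟨hx.1, hxE⟩, mul_nonneg hδ (sq_nonneg ‖x - x₀‖)]
    · have hxS : dist x x₀ = R := hx.1.eq_of_not_lt fun hlt => hx.2 ⟨hlt, hxE⟩
      rw [← dist_eq_norm, hxS]
      exact sub_nonneg.2 (hβS x hxS)
  obtain ⟨y, hy, hneg, hmin⟩ := exists_isMinOn_of_continuousOn_le (isCompact_closedBall x₀ R) hlsc'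
    (fun x hx => ContinuousAt.continuousWithinAt (by have := (hβ x hx).continuousAt; fun_prop))
    (fun x hx => by linarith [hlow x ⟨hx.1, hx.2.2⟩]) hnonneg ⟨ball_subset_closedBall hz.1, hz⟩
    (by linarith)
  set c := u y + -(g y + β y) with hc
  refine (hstrict y hy.2.1 c hneg ?_).not_ge (hu.jetEval_le_of_contDiffAt (hsub hy)
    ((hθ y hy.1).add contDiffAt_const) (by rw [hc]; ring) ?_)
  · linarith [hlow y ⟨hy.1, hy.2.2⟩, mul_nonneg hδ (sq_nonneg ‖y - x₀‖)]
  · filter_upwards [nhdsWithin_le_nhds (isOpen_ball.mem_nhds hy.2.1), self_mem_nhdsWithin]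
      with x hx hxO
    have : c ≤ u x + -(g x + β x) := hmin ⟨ball_subset_closedBall hx, hx, hxO.2⟩
    linarith

end IsViscositySupersolution

/-! ### Supersolutions near a singular point -/

lemma exists_forall_pos_add_mul {X : Type*} [TopologicalSpace X] {S : Set X} {a b : X → ℝ}
    (hS : IsCompact S) (ha : ContinuousOn a S) (hb : ContinuousOn b S) (hpos : ∀ v ∈ S, 0 < b v) :
    ∃ A : ℝ, ∀ v ∈ S, 0 < a v + A * b v := by
  obtain ⟨C, hC⟩ := hS.bddBelow_image (ha.div hb fun v hv => (hpos v hv).ne')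
  refine ⟨1 - C, fun v hv => ?_⟩
  have : C ≤ a v / b v := hC (mem_image_of_mem _ hv)
  rw [le_div_iff₀ (hpos v hv)] at this
  linarith [hpos v hv]

lemma exists_apply_ne_zero_of_finrank_ker_lt {V W : Type*} [AddCommGroup V] [Module ℝ V]
    [FiniteDimensional ℝ V] [AddCommGroup W] [Module ℝ W] {m : ℕ} {v : Fin m → V} {T : V →ₗ[ℝ] W}
    (hv : LinearIndependent ℝ v) (hker : finrank ℝ T.ker < m) : ∃ i, T (v i) ≠ 0 := by
  by_contra! hmem
  have hv' : LinearIndependent ℝ fun i => (⟨v i, hmem i⟩ : T.ker) :=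
    LinearIndependent.of_comp T.ker.subtype hv
  have := hv'.fintype_card_le_finrank
  rw [Fintype.card_fin] at this
  exact hker.not_ge this

lemma exists_eventually_frameLaplacian_add_norm_sq_pos {V W : Type*} [NormedAddCommGroup V]
    [InnerProductSpace ℝ V] [FiniteDimensional ℝ V] [NormedAddCommGroup W] [InnerProductSpace ℝ W]
    {m : ℕ} {g : V → ℝ} {Φ : V → W} {x₀ : V} (hg : ContDiffAt ℝ 2 g x₀)
    (hΦ : ContDiffAt ℝ 2 Φ x₀) (hΦ0 : Φ x₀ = 0) (hker : finrank ℝ (fderiv ℝ Φ x₀).ker < m) :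
    ∃ A : ℝ, ∀ᶠ x in 𝓝 x₀, ∀ v : Fin m → V, Orthonormal ℝ v →
      0 < frameLaplacian v (fun z => g z + A * ‖Φ z‖ ^ 2) x := by
  have hnormsq : ContDiffAt ℝ 2 (fun z => ‖Φ z‖ ^ 2) x₀ := hΦ.norm_sq ℝ
  have htransverse (v : Fin m → V) (hv : Orthonormal ℝ v) :
      0 < frameLaplacian v (fun z => ‖Φ z‖ ^ 2) x₀ := by
    obtain ⟨i, hi⟩ := exists_apply_ne_zero_of_finrank_ker_lt hv.linearIndependent hker
    simp only [frameLaplacian_norm_sq hΦ, hΦ0, inner_zero_left, add_zero]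
    exact mul_pos two_pos (Finset.sum_pos' (fun _ _ => by positivity)
      ⟨i, Finset.mem_univ i, by positivity⟩)
  obtain ⟨A, hA⟩ := exists_forall_pos_add_mul isCompact_setOf_orthonormal
    (continuous_frameLaplacian_left g x₀).continuousOn
    (continuous_frameLaplacian_left (fun z => ‖Φ z‖ ^ 2) x₀).continuousOn htransverse
  refine ⟨A, isCompact_setOf_orthonormal.eventually_forall_of_forall_eventually fun v hv => ?_⟩
  refine (continuousAt_frameLaplacian (hg.add (contDiffAt_const.mul hnormsq))).eventually
    (lt_mem_nhds ?_)
  beta_reduce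
  rw [frameLaplacian_add hg (contDiffAt_const.mul hnormsq), frameLaplacian_const_mul hnormsq]
  exact hA v hv

namespace IsViscositySupersolution

variable {n m : ℕ} {Ω E : Set (En n)} {F : En n → ℝ → En n → Matrix (Fin n) (Fin n) ℝ → ℝ}
  {f u g : En n → ℝ} {x₀ : En n} {δ : ℝ}
  {W : Type*} [NormedAddCommGroup W] [InnerProductSpace ℝ W] {Φ : En n → W}

lemma eventually_add_inner_le (hu : IsViscositySupersolution F f (Ω \ E) u)
    (hlsc : LowerSemicontinuousOn u (Ω \ E)) (hΩ : IsOpen Ω) (hx₀ : x₀ ∈ Ω)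
    (hF : ContinuousOn
      (fun q : En n × ℝ × En n × Matrix (Fin n) (Fin n) ℝ => F q.1 q.2.1 q.2.2.1 q.2.2.2)
      {q | q.1 ∈ Ω})
    (hf : UpperSemicontinuousOn f Ω) (hg : ContDiffAt ℝ 2 g x₀) (hlt : f x₀ < jetEval F g x₀)
    (hδ : 0 < δ) (hlow : ∀ᶠ x in 𝓝 x₀, x ∉ E → g x + δ * ‖x - x₀‖ ^ 2 ≤ u x)
    (hΦ : ContDiffAt ℝ 2 Φ x₀) (hΦE : ∀ᶠ x in 𝓝 x₀, x ∈ E → Φ x = 0) :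
    ∀ᶠ z : W × En n in 𝓝 (0, x₀), z.2 ∉ E → g z.2 + ⟪z.1, Φ z.2⟫_ℝ ≤ u z.2 := by
  have hH : ContDiffAt ℝ 2
      (Function.uncurry fun (q : W × ℝ) x => g x + ⟪q.1, Φ x⟫_ℝ + q.2) ((0, 0), x₀) :=
    ((hg.comp _ contDiffAt_snd).add ((contDiffAt_fst.comp _ contDiffAt_fst).inner ℝ
      (hΦ.comp _ contDiffAt_snd))).add (contDiffAt_snd.comp _ contDiffAt_fst)
  have hstrict := eventually_lt_jetEval hΩ hx₀ hF hf hH (by simpa using hlt)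
  obtain ⟨ε, hε, hstrict⟩ := Metric.eventually_nhds_iff_ball.1 hstrict
  obtain ⟨R, hR, hball⟩ := nhds_basis_closedBall.eventually_iff.1
    ((hΩ.eventually_mem hx₀).and <| (eventually_mem_set.2 (ball_mem_nhds x₀ hε)).and <|
      (hg.eventually (by simp)).and <| (hΦ.eventually (by simp)).and <| hlow.and hΦE)
  choose hyΩ hyε hgy hΦy hlowy hΦEy using hball
  have hsmall : ∀ᶠ p : W in 𝓝 0, ∀ x ∈ closedBall x₀ R, ⟪p, Φ x⟫_ℝ < min ε (δ * R ^ 2) := by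
    refine (isCompact_closedBall x₀ R).eventually_forall_of_forall_eventually fun x hx => ?_
    have hΦx : ContinuousAt Φ x := (hΦy hx).continuousAt
    have hinner : ContinuousAt (fun z : W × En n => ⟪z.1, Φ z.2⟫_ℝ) (0, x) :=
      continuousAt_fst.inner (hΦx.comp continuousAt_snd)
    exact hinner.eventually (gt_mem_nhds (by
      simp only [inner_zero_left]
      positivity))
  rw [nhds_prod_eq]
  filter_upwards [((eventually_mem_set.2 (ball_mem_nhds (0 : W) hε)).and hsmall).prod_mk
    (ball_mem_nhds x₀ hR)] with ⟨p, x⟩ ⟨⟨hpε, hp⟩, hx⟩ hxE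
  refine hu.add_le_of_barrier hlsc hyΩ hgy
    (fun y hy => contDiffAt_const.inner ℝ (hΦy hy)) hδ.le (fun y hy => hlowy hy.1 hy.2)
    (fun y hy => by rw [hΦEy hy.1 hy.2, inner_zero_right])
    (fun y hy => (hp y (sphere_subset_closedBall hy)).le.trans (min_le_right _ _))
    (fun y hy c hc hcy => ?_) x ⟨hx, hxE⟩
  have hy' := ball_subset_closedBall hy
  have hcε : |c| < ε := by
    rw [abs_of_neg hc]
    linarith [(hp y hy').trans_le (min_le_left _ _)]
  exact hstrict ((p, c), y)
    (by simpa [← ball_prod_same, hcε] using ⟨mem_ball_zero_iff.1 hpε, hyε hy'⟩)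

lemma exists_eventually_add_le_of_isPolarOn
    (hu : IsViscositySupersolution (fun _ _ _ M => sumSmallestEigs m M) (fun _ => 0) (Ω \ E) u)
    (hlsc : LowerSemicontinuousOn u (Ω \ E)) (hΩ : IsOpen Ω) (hx₀ : x₀ ∈ Ω) (hm : m ≤ n)
    {B : Set (En n)} (hB : B ∈ 𝓝 x₀) (hpolar : IsPolarOn m E B) (hg : ContDiffAt ℝ 2 g x₀)
    (hpos : ∀ᶠ x in 𝓝 x₀, ∀ v : Fin m → En n, Orthonormal ℝ v → 0 < frameLaplacian v g x)
    (hδ : 0 < δ) (hlow : ∀ᶠ x in 𝓝 x₀, x ∉ E → g x + δ * ‖x - x₀‖ ^ 2 ≤ u x) :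
    ∃ η > 0, ∀ᶠ x in 𝓝 x₀, x ∉ E → g x + η ≤ u x := by
  obtain ⟨R, hR, hball⟩ := nhds_basis_closedBall.eventually_iff.1
    ((hΩ.eventually_mem hx₀).and <| (eventually_mem_set.2 hB).and <|
      (hg.eventually (by simp)).and <| hpos.and hlow)
  choose hyΩ hyB hgy hposy hlowy using hball
  set η := δ * R ^ 2
  have hη : 0 < η := by positivity
  refine ⟨η, hη, ?_⟩
  filter_upwards [ball_mem_nhds x₀ hR] with x hx hxE
  refine le_of_forall_pos_le_add fun ε hε => ?_
  obtain ⟨ψ, hψ, hnonneg, hone, hsmall⟩ := hpolar x hxE (ε / η) (by positivity)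
  have hβ : ContDiff ℝ 2 fun z => -η * ψ z + η := (contDiff_const.mul hψ.1).add contDiff_const
  have key : g x + (-η * ψ x + η) ≤ u x := by
    refine hu.add_le_of_barrier hlsc hyΩ hgy (fun y _ => hβ.contDiffAt) hδ.le
      (fun y hy => hlowy hy.1 hy.2) (fun y hy => by nlinarith [hone y ⟨hyB hy.1, hy.2⟩])
      (fun y hy => by nlinarith [hnonneg y (hyB (sphere_subset_closedBall hy))])
      (fun y hy c _ _ => ?_) x ⟨hx, hxE⟩
    have hy' := ball_subset_closedBall hy
    refine sumSmallestEigs_hess_pos (((hgy hy').add hβ.contDiffAt).add contDiffAt_const) hm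
      fun v hv => ?_
    rw [frameLaplacian_add_const, frameLaplacian_add (hgy hy') hβ.contDiffAt,
      frameLaplacian_add_const, frameLaplacian_const_mul hψ.1.contDiffAt]
    nlinarith [hposy hy' v hv, hψ.2 y v hv]
  have := mul_le_mul_of_nonneg_left hsmall hη.le
  rw [mul_div_cancel₀ ε hη.ne'] at this
  linarith

end IsViscositySupersolution

section Extension

variable {n k : ℕ} {Ω E : Set (En n)} {F : En n → ℝ → En n → Matrix (Fin n) (Fin n) ℝ → ℝ}
  {f u φ : En n → ℝ} {x₀ : En n}

lemma IsViscositySupersolution.eventually_add_norm_sq_le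
    (hu : IsViscositySupersolution F f (Ω \ E) u) (hlsc : LowerSemicontinuousOn u (Ω \ E))
    (hΩ : IsOpen Ω) (hx₀ : x₀ ∈ Ω)
    (hF : ContinuousOn
      (fun q : En n × ℝ × En n × Matrix (Fin n) (Fin n) ℝ => F q.1 q.2.1 q.2.2.1 q.2.2.2)
      {q | q.1 ∈ Ω})
    (hf : UpperSemicontinuousOn f Ω) (hφ : ContDiffAt ℝ 2 φ x₀) (hlt : f x₀ < jetEval F φ x₀)
    (hlow : ∀ᶠ x in 𝓝 x₀, x ∉ E → φ x ≤ u x) {W : Type*} [NormedAddCommGroup W]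
    [InnerProductSpace ℝ W] {Φ : En n → W} (hΦ : ContDiffAt ℝ 2 Φ x₀)
    (hΦE : ∀ᶠ x in 𝓝 x₀, x ∈ E → Φ x = 0) (hΦ0 : Φ x₀ = 0) :
    ∃ δ > 0, ∀ A : ℝ, ∀ᶠ x in 𝓝 x₀, x ∉ E →
      φ x - δ * ‖x - x₀‖ ^ 2 + A * ‖Φ x‖ ^ 2 ≤ u x := by
  obtain ⟨δ, hδ, hltδ⟩ := exists_pos_lt_jetEval_sub_norm_sq hΩ hx₀ hF hf hφ hlt
  have hg : ContDiffAt ℝ 2 (fun x => φ x - δ * ‖x - x₀‖ ^ 2) x₀ :=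
    hφ.sub (contDiffAt_const.mul ((contDiffAt_id.sub contDiffAt_const).norm_sq ℝ))
  have hinner := hu.eventually_add_inner_le hlsc hΩ hx₀ hF hf hg hltδ hδ
    (by simpa only [sub_add_cancel] using hlow) hΦ hΦE
  refine ⟨δ, hδ, fun A => ?_⟩
  have htendsto : Tendsto (fun x => (A • Φ x, x)) (𝓝 x₀) (𝓝 (0, x₀)) := by
    have : ContinuousAt (fun x => (A • Φ x, x)) x₀ :=
      (hΦ.continuousAt.const_smul A).prodMk continuousAt_id
    simpa only [ContinuousAt, hΦ0, smul_zero] using this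
  filter_upwards [htendsto.eventually hinner] with x hx hxE
  simpa only [real_inner_smul_left, real_inner_self_eq_norm_sq] using hx hxE

lemma IsViscositySupersolution.exists_eventually_apply_add_le
    (hu : IsViscositySupersolution F f (Ω \ E) u)
    (heig : IsViscositySupersolution
      (fun _ _ _ M => sumSmallestEigs (k + 2) M) (fun _ => 0) (Ω \ E) u)
    (hlsc : LowerSemicontinuousOn u (Ω \ E)) (hΩ : IsOpen Ω) (hx₀ : x₀ ∈ Ω)
    (hF : ContinuousOn
      (fun q : En n × ℝ × En n × Matrix (Fin n) (Fin n) ℝ => F q.1 q.2.1 q.2.2.1 q.2.2.2)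
      {q | q.1 ∈ Ω})
    (hf : UpperSemicontinuousOn f Ω) (hk : k + 2 ≤ n) (hE : IsClosed E) (hx₀E : x₀ ∈ E)
    (hEx₀ : IsC2SubmanifoldAt k E x₀) (hφ : ContDiffAt ℝ 2 φ x₀)
    (hlt : f x₀ < jetEval F φ x₀) (hlow : ∀ᶠ x in 𝓝 x₀, x ∉ E → φ x ≤ u x) :
    ∃ η > 0, ∀ᶠ x in 𝓝 x₀, x ∉ E → φ x₀ + η ≤ u x := by
  obtain ⟨Φ, hΦ, hΦE, hker⟩ := hEx₀.exists_defining_map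
  have hΦ0 : Φ x₀ = 0 := hΦE.self_of_nhds hx₀E
  obtain ⟨δ, hδ, hquad⟩ :=
    hu.eventually_add_norm_sq_le hlsc hΩ hx₀ hF hf hφ hlt hlow hΦ hΦE hΦ0
  have hφδ : ContDiffAt ℝ 2 (fun x => φ x - 2 * δ * ‖x - x₀‖ ^ 2) x₀ :=
    hφ.sub (contDiffAt_const.mul ((contDiffAt_id.sub contDiffAt_const).norm_sq ℝ))
  obtain ⟨A, hA⟩ := exists_eventually_frameLaplacian_add_norm_sq_pos hφδ hΦ hΦ0
    (hker.trans_lt (by omega : k < k + 2))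
  set g := fun x => φ x - 2 * δ * ‖x - x₀‖ ^ 2 + A * ‖Φ x‖ ^ 2 with hgdef
  have hg : ContDiffAt ℝ 2 g x₀ := hφδ.add (contDiffAt_const.mul (hΦ.norm_sq ℝ))
  have hg0 : g x₀ = φ x₀ := by simp [hgdef, hΦ0]
  obtain ⟨B, hB, hpolar⟩ := hEx₀.exists_isPolarOn hE hx₀E
  obtain ⟨η, hη, hlift⟩ := heig.exists_eventually_add_le_of_isPolarOn hlsc hΩ hx₀ hk hB hpolar
    hg hA hδ ((hquad A).mono fun x hx hxE => by linarith [hx hxE])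
  have hgnear : ∀ᶠ x in 𝓝 x₀, φ x₀ - η / 2 < g x :=
    hg.continuousAt.eventually (lt_mem_nhds (by linarith))
  refine ⟨η / 2, half_pos hη, ?_⟩
  filter_upwards [hlift, hgnear] with x hx hgx hxE
  linarith [hx hxE]

lemma lt_liminfExtension {a c : ℝ} (hx₀E : x₀ ∈ E) (hac : a < c)
    (hu : ∀ᶠ x in 𝓝 x₀, x ∉ E → c ≤ u x) : (a : EReal) < liminfExtension Ω E u x₀ := by
  simp only [liminfExtension, if_pos hx₀E]
  refine (EReal.coe_lt_coe_iff.2 hac).trans_le (le_liminf_of_le (by isBoundedDefault) ?_)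
  filter_upwards [nhdsWithin_le_nhds hu, self_mem_nhdsWithin] with x hx hxΩ
  exact EReal.coe_le_coe_iff.2 (hx hxΩ.2)

end Extension

theorem removable_submanifold_singularity_eigenvalue_general
    {n k : ℕ} (hk : k + 2 ≤ n) {Ω E : Set (En n)} (hΩ : IsOpen Ω) (hE : IsClosed E)
    (hEΩ : ∀ x ∈ E ∩ Ω, IsC2SubmanifoldAt k E x)
    {F : En n → ℝ → En n → Matrix (Fin n) (Fin n) ℝ → ℝ}
    (hF : ContinuousOn
      (fun q : En n × ℝ × En n × Matrix (Fin n) (Fin n) ℝ => F q.1 q.2.1 q.2.2.1 q.2.2.2)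
      {q | q.1 ∈ Ω})
    {f u : En n → ℝ} (hf : UpperSemicontinuousOn f Ω) (hu : LowerSemicontinuousOn u (Ω \ E))
    (heig : IsViscositySupersolution
      (fun _ _ _ M => sumSmallestEigs (k + 2) M) (fun _ => 0) (Ω \ E) u)
    (hvisc : IsViscositySupersolution F f (Ω \ E) u) :
    ERealIsViscositySupersolution F f Ω (liminfExtension Ω E u) := by
  intro φ hφ x₀ hx₀ hval hmin
  rw [hΩ.nhdsWithin_eq hx₀] at hmin
  have hφ₀ : ContDiffAt ℝ 2 φ x₀ := hφ.contDiffAt (hΩ.mem_nhds hx₀)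
  have hlow : ∀ᶠ x in 𝓝 x₀, x ∉ E → φ x ≤ u x := by
    filter_upwards [hmin] with x hx hxE
    rwa [liminfExtension, if_neg hxE, EReal.coe_le_coe_iff] at hx
  by_cases hx₀E : x₀ ∈ E
  · by_contra! hlt
    obtain ⟨η, hη, hlift⟩ := hvisc.exists_eventually_apply_add_le heig hu hΩ hx₀ hF hf hk hE hx₀E
      (hEΩ x₀ ⟨hx₀E, hx₀⟩) hφ₀ hlt hlow
    exact (lt_liminfExtension hx₀E (lt_add_of_pos_right _ hη) hlift).ne' hval
  · rw [liminfExtension, if_neg hx₀E, EReal.coe_eq_coe_iff] at hval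
    refine hvisc.jetEval_le_of_contDiffAt ⟨hx₀, hx₀E⟩ hφ₀ hval ?_
    filter_upwards [nhdsWithin_le_nhds hlow, self_mem_nhdsWithin] with x hx hxΩ using hx hxΩ.2

/-- **Corollary 1.1.** A viscosity supersolution `u` of a degenerate elliptic equation
outside a smooth closed `k`-dimensional submanifold `E ⊂ Ω` (`0 ≤ k ≤ n-2`), bounded
below and satisfying `λ₁(∇²u) + ⋯ + λ_{k+2}(∇²u) ≤ 0` in `Ω \ E` in the viscosity sense,
extends (by `liminf`) to a viscosity supersolution in all of `Ω`. -/
theorem removable_submanifold_singularity_eigenvalue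
    {n : ℕ} (hn : 2 ≤ n) (Ω : Set (En n))
    (hΩopen : IsOpen Ω) (hΩconn : IsConnected Ω) (hΩbdd : Bornology.IsBounded Ω)
    (F : En n → ℝ → En n → Matrix (Fin n) (Fin n) ℝ → ℝ)
    (hFcont : ContinuousOn
      (fun q : En n × ℝ × En n × Matrix (Fin n) (Fin n) ℝ => F q.1 q.2.1 q.2.2.1 q.2.2.2)
      {q | q.1 ∈ Ω})
    (hFell : DegenerateElliptic Ω F)
    (k : ℕ) (hk : k ≤ n - 2)
    (E : Set (En n)) (hEΩ : E ⊆ Ω) (hE : IsSmoothClosedSubmanifold k E)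
    (f : En n → ℝ) (hf : UpperSemicontinuousOn f Ω)
    (u : En n → ℝ) (hu : LowerSemicontinuousOn u (Ω \ E))
    (hubd : BddBelow (u '' (Ω \ E)))
    (heig : IsViscositySupersolution
      (fun _ _ _ M => sumSmallestEigs (k + 2) M) (fun _ => 0) (Ω \ E) u)
    (hvisc : IsViscositySupersolution F f (Ω \ E) u) :
    ERealIsViscositySupersolution F f Ω (liminfExtension Ω E u) :=
  removable_submanifold_singularity_eigenvalue_general (by omega) hΩopen hE.1.isClosed
    (fun _ hx => hE.isC2SubmanifoldAt (by omega) hx.1) hFcont hf hu heig hvisc
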